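/- Let E₁, E₂ be nontrivial word equations on n unknowns such that the set of solutions of E₁ of rank n − 1 is different from the set of solutions of E₂ of rank n − 1. Let V₁, …, V_p be a minimal cover, i.e., a family of (n − 1)-dimensional ℚ-linear subspaces of ℚ^n whose union contains the length type of every common solution of E₁ and E₂ of rank n − 1, such that no proper subfamily has this covering property. Then for every i and every L ∈ ℕ^n with L ∈ V_i, the equations E₁ and E₂ have the same set of solutions of rank n − 1 and length type L. -/

import Mathlib

open Polynomial

/-- The characteristic polynomial `P(w)` of a word. -/
noncomputable def wordPoly (w : List ℕ) : Polynomial ℤ :=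
  ∑ i ∈ Finset.range w.length, Polynomial.C (w.getD i 0 : ℤ) * Polynomial.X ^ i

/-- Application of a morphism (given by the images of the unknowns) to a word. -/
def mApply {n : ℕ} {β : Type*} (h : Fin n → List β) (w : List (Fin n)) : List β :=
  (w.map h).flatten

/-- The morphism maps every unknown to a word over the alphabet `A`. -/
def IntoAlph {n : ℕ} (A : Finset ℕ) (h : Fin n → List ℕ) : Prop :=
  ∀ i, ∀ a ∈ h i, a ∈ A

/-- `w` is a product of words from `A`. -/
def InStar (A : Finset (List ℕ)) (w : List ℕ) : Prop :=
  ∃ l : List (List ℕ), (∀ u ∈ l, u ∈ A) ∧ l.flatten = w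

/-- The combinatorial rank of a morphism: the smallest `r` such that there is a set of
`r` words whose products contain all images of the unknowns. -/
noncomputable def mRank {n : ℕ} (h : Fin n → List ℕ) : ℕ :=
  sInf {r | ∃ A : Finset (List ℕ), A.card = r ∧ ∀ i, InStar A (h i)}

/-- The length type of a morphism, as a rational vector. -/
def lenQ {n : ℕ} (h : Fin n → List ℕ) : Fin n → ℚ :=
  fun i => ((h i).length : ℚ)

/-- `|w|_L`: the length of the image of `w` under any morphism of length type `L`. -/
def lenL {n : ℕ} (L : Fin n → ℕ) (w : List (Fin n)) : ℕ :=
  (w.map L).sum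

/-- The polynomial `Q_{E,x,L}` for the word equation `u = v`, the unknown `x` and the
length type `L`. -/
noncomputable def eqPoly {n : ℕ} (u v : List (Fin n)) (x : Fin n) (L : Fin n → ℕ) :
    Polynomial ℤ :=
  (∑ i ∈ Finset.range u.length,
      if u.getD i x = x then (Polynomial.X : Polynomial ℤ) ^ lenL L (u.take i) else 0)
    - ∑ i ∈ Finset.range v.length,
      if v.getD i x = x then (Polynomial.X : Polynomial ℤ) ^ lenL L (v.take i) else 0

/-- Embedding of `ℤ[X]` into the field `ℚ(X)` of rational functions. -/
noncomputable def toRF (p : Polynomial ℤ) : RatFunc ℚ :=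
  algebraMap (Polynomial ℚ) (RatFunc ℚ) (p.map (Int.castRingHom ℚ))


/-! ### A Fox-derivative style linear functional attached to a word -/

/-- `fox e l w P = ∑ over positions of w of e(weight of the prefix) * P(letter)`. -/
noncomputable def fox {ι K : Type} [Field K] (e : ℚ → K) (l : ι → ℚ) :
    List ι → ((ι → K) →ₗ[K] K)
  | [] => 0
  | y :: w => LinearMap.proj y + e (l y) • fox e l w

/-- `e` is a character. -/
structure IsChar {K : Type} [Field K] (e : ℚ → K) : Prop where
  zero : e 0 = 1
  add : ∀ a b, e (a + b) = e a * e b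

theorem IsChar.ne_zero {K : Type} [Field K] {e : ℚ → K} (he : IsChar e) (a : ℚ) : e a ≠ 0 := by
  intro h
  have := he.add a (-a)
  rw [add_neg_cancel, he.zero, h, zero_mul] at this
  exact one_ne_zero this

@[simp] theorem fox_nil {ι K : Type} [Field K] (e : ℚ → K) (l : ι → ℚ) (P : ι → K) :
    fox e l [] P = 0 := rfl

@[simp] theorem fox_cons {ι K : Type} [Field K] (e : ℚ → K) (l : ι → ℚ) (P : ι → K)
    (y : ι) (w : List ι) : fox e l (y :: w) P = P y + e (l y) * fox e l w P := rfl

theorem fox_append {ι K : Type} [Field K] {e : ℚ → K} (he : IsChar e) (l : ι → ℚ) (P : ι → K)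
    (u v : List ι) : fox e l (u ++ v) P = fox e l u P + e ((u.map l).sum) * fox e l v P := by
  induction u with
  | nil => simp [he.zero]
  | cons y w ih => simp [ih, he.add]; ring

@[simp] theorem mApply_nil {n : ℕ} {β : Type*} (h : Fin n → List β) : mApply h [] = [] := rfl

@[simp] theorem mApply_cons {n : ℕ} {β : Type*} (h : Fin n → List β) (x : Fin n)
    (w : List (Fin n)) : mApply h (x :: w) = h x ++ mApply h w := by simp [mApply]

theorem mApply_append {n : ℕ} {β : Type*} (h : Fin n → List β) (u v : List (Fin n)) :
    mApply h (u ++ v) = mApply h u ++ mApply h v := by simp [mApply]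

theorem mApply_comp {n m : ℕ} {β : Type*} (g : Fin m → List β) (t : Fin n → List (Fin m))
    (h : Fin n → List β) (hh : ∀ x, h x = mApply g (t x)) (w : List (Fin n)) :
    mApply h w = mApply g (mApply t w) := by
  induction w with
  | nil => rfl
  | cons x w ih => simp [mApply_append, ih, hh]

theorem fox_mApply {n : ℕ} {β K : Type} [Field K] {e : ℚ → K} (he : IsChar e) (l : β → ℚ)
    (P : β → K) (h : Fin n → List β) (w : List (Fin n)) :
    fox e l (mApply h w) P
      = fox e (fun x => ((h x).map l).sum) w (fun x => fox e l (h x) P) := by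
  induction w with
  | nil => simp
  | cons x w ih => simp [fox_append he, ih]

/-- Nondegenerate morphisms. -/
def Good {n m : ℕ} (t : Fin n → List (Fin m)) : Prop :=
  ∀ (K : Type) [Field K] (e : ℚ → K), IsChar e → ∀ (l : Fin m → ℚ) (P : Fin m → K),
    (∀ x, fox e l (t x) P = 0) → P = 0

theorem list_decomp {α : Type*} : ∀ (u v : List α), u ≠ v → ∃ p u' v', u = p ++ u' ∧ v = p ++ v' ∧
    ((∃ y w, u' = [] ∧ v' = y :: w) ∨ (∃ x w, u' = x :: w ∧ v' = []) ∨
      ∃ x y w z, x ≠ y ∧ u' = x :: w ∧ v' = y :: z)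
  | [], [], h => absurd rfl h
  | [], y :: w, _ => ⟨[], [], y :: w, rfl, rfl, Or.inl ⟨y, w, rfl, rfl⟩⟩
  | x :: w, [], _ => ⟨[], x :: w, [], rfl, rfl, Or.inr (Or.inl ⟨x, w, rfl, rfl⟩)⟩
  | x :: w, y :: z, h => by
    by_cases hxy : x = y
    · subst hxy
      obtain ⟨p, u', v', h1, h2, h3⟩ := list_decomp w z (by rintro rfl; exact h rfl)
      exact ⟨x :: p, u', v', by simp [h1], by simp [h2], h3⟩
    · exact ⟨[], x :: w, y :: z, rfl, rfl, Or.inr (Or.inr ⟨x, y, w, z, hxy, rfl, rfl⟩)⟩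

/-- The elementary substitution `y ↦ x y`. -/
def elemSub {n : ℕ} (x y : Fin n) : Fin n → List (Fin n) :=
  fun i => if i = y then [x, y] else [i]

theorem elemSub_head {n : ℕ} {x y : Fin n} (hxy : x ≠ y) (u w : List (Fin n)) :
    mApply (elemSub x y) u ≠ y :: w := by
  cases u with
  | nil => simp
  | cons i u =>
    by_cases hi : i = y
    · simp [elemSub, hi, hxy]
    · simp [elemSub, hi]

theorem struct_erase {m : ℕ} (h : Fin (m + 1) → List ℕ) (x : Fin (m + 1)) (hx : h x = []) :
    ∃ (t : Fin (m + 1) → List (Fin m)) (g : Fin m → List ℕ),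
      (∀ i, h i = mApply g (t i)) ∧ Good t := by
  refine ⟨x.insertNth (α := fun _ => List (Fin m)) [] (fun j => [j]),
    fun j => h (x.succAbove j), ?_, ?_⟩
  · rw [Fin.forall_iff_succAbove x]
    constructor
    · simp [hx]
    · intro j; simp
  · intro K _ e he l P hP
    funext j
    have := hP (x.succAbove j)
    simpa using this

theorem struct_main {m : ℕ} : ∀ (N : ℕ) (h : Fin (m + 1) → List ℕ) (u v : List (Fin (m + 1))),
    u ≠ v → ∑ i, (h i).length ≤ N → mApply h u = mApply h v →
    ∃ (t : Fin (m + 1) → List (Fin m)) (g : Fin m → List ℕ),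
      (∀ i, h i = mApply g (t i)) ∧ Good t := by
  intro N
  induction N with
  | zero =>
    intro h u v _ hs _
    have h0 : h 0 = [] := by
      have := Finset.single_le_sum (f := fun i => (h i).length) (fun i _ => Nat.zero_le _)
        (Finset.mem_univ (0 : Fin (m + 1)))
      exact List.length_eq_zero_iff.mp (by omega)
    exact struct_erase h 0 h0
  | succ N ih =>
    intro h u v huv hs he
    by_cases hz : ∃ x, h x = []
    · obtain ⟨x, hx⟩ := hz
      exact struct_erase h x hx
    push Not at hz
    -- the elementary step
    have step : ∀ (x y : Fin (m + 1)) (w z : List (Fin (m + 1))) (r : List ℕ), x ≠ y →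
        mApply h (x :: w) = mApply h (y :: z) → h y = h x ++ r →
        ∃ (t : Fin (m + 1) → List (Fin m)) (g : Fin m → List ℕ),
          (∀ i, h i = mApply g (t i)) ∧ Good t := by
      intro x y w z r hxy heq hr
      let h' := Function.update h y r
      have hh' : ∀ i, h i = mApply h' (elemSub x y i) := by
        intro i
        by_cases hi : i = y
        · subst hi; simp [elemSub, h', hxy, hr]
        · simp [elemSub, h', hi]
      have hlt : ∑ i, (h' i).length < ∑ i, (h i).length := by
        apply Finset.sum_lt_sum
        · intro i _
          by_cases hi : i = y
          · subst hi; simp [h', hr]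
          · simp [h', hi]
        · refine ⟨y, Finset.mem_univ _, ?_⟩
          have := List.length_pos_iff.mpr (hz x)
          simp [h', hr, this]
      obtain ⟨t, g, ht, hg⟩ := ih h' (mApply (elemSub x y) (x :: w))
        (mApply (elemSub x y) (y :: z))
        (by
          have := elemSub_head hxy w (mApply (elemSub x y) z)
          simpa [elemSub, hxy] using this)
        (by omega)
        (by rw [← mApply_comp h' _ h hh', ← mApply_comp h' _ h hh', heq])
      refine ⟨fun i => mApply t (elemSub x y i), g, ?_, ?_⟩
      · intro i
        rw [hh', mApply_comp g t h' ht]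
      · intro K _ e hch l P hP
        apply hg K e hch l P
        have hne : ∀ i, i ≠ y → fox e l (t i) P = 0 := by
          intro i hi
          simpa [elemSub, hi] using hP i
        intro i
        by_cases hi : i = y
        · subst hi
          have := hP i
          simp [elemSub, fox_append hch, hne x hxy, hch.ne_zero] at this
          exact this
        · exact hne i hi
    obtain ⟨p, u', v', rfl, rfl, hc⟩ := list_decomp u v huv
    rw [mApply_append, mApply_append] at he
    replace he := List.append_cancel_left he
    rcases hc with ⟨y, w, rfl, rfl⟩ | ⟨x, w, rfl, rfl⟩ | ⟨x, y, w, z, hxy, rfl, rfl⟩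
    · simp [hz y] at he
    · simp [hz x] at he
    · have he2 := he
      simp only [mApply_cons] at he2
      rcases List.append_eq_append_iff.mp he2 with ⟨r, hr, _⟩ | ⟨r, hr, _⟩
      · exact step x y w z r hxy he hr
      · exact step y x z w r hxy.symm he.symm hr

/-! ### Rank -/

theorem mRank_le {n : ℕ} (h : Fin n → List ℕ) (B : Finset (List ℕ)) (hB : ∀ i, InStar B (h i)) :
    mRank h ≤ B.card := Nat.sInf_le ⟨B, rfl, hB⟩

theorem inStar_mApply {m : ℕ} (g : Fin m → List ℕ) (w : List (Fin m)) :
    InStar (Finset.univ.image g) (mApply g w) := by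
  refine ⟨w.map g, ?_, rfl⟩
  intro u hu
  obtain ⟨i, _, rfl⟩ := List.mem_map.mp hu
  simp

theorem mRank_le_of_factor {n m : ℕ} (h : Fin n → List ℕ) (g : Fin m → List ℕ)
    (t : Fin n → List (Fin m)) (ht : ∀ i, h i = mApply g (t i)) : mRank h ≤ m := by
  refine (mRank_le h (Finset.univ.image g) (fun i => ?_)).trans ?_
  · rw [ht]; exact inStar_mApply g _
  · exact Finset.card_image_le.trans (by simp)

theorem factor_solves {m : ℕ} (h : Fin (m + 1) → List ℕ) (g : Fin m → List ℕ)
    (t : Fin (m + 1) → List (Fin m)) (ht : ∀ i, h i = mApply g (t i)) (hr : mRank h = m)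
    (u v : List (Fin (m + 1))) (huv : mApply h u = mApply h v) : mApply t u = mApply t v := by
  by_contra hne
  rw [mApply_comp g t h ht, mApply_comp g t h ht] at huv
  cases m with
  | zero =>
    apply hne
    have : ∀ w : List (Fin 0), w = [] := by
      intro w
      cases w with
      | nil => rfl
      | cons a _ => exact a.elim0
    rw [this (mApply t u), this (mApply t v)]
  | succ k =>
    obtain ⟨t', g', ht', _⟩ := struct_main _ g _ _ hne le_rfl huv
    have := mRank_le_of_factor h g' (fun i => mApply t' (t i))
      (fun i => by rw [ht, mApply_comp g' t' g ht'])
    omega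

theorem at_most_one_zero {m : ℕ} (h : Fin (m + 1) → List ℕ) (hr : mRank h = m)
    (x y : Fin (m + 1)) (hxy : x ≠ y) (hx : h x = []) (hy : h y = []) : False := by
  have h1 := mRank_le h (((Finset.univ.erase x).erase y).image h) (by
    intro i
    by_cases hi : i = x
    · exact ⟨[], by simp, by simp [hi, hx]⟩
    by_cases hi' : i = y
    · exact ⟨[], by simp, by simp [hi', hy]⟩
    refine ⟨[h i], ?_, by simp⟩
    intro u hu
    rw [List.mem_singleton] at hu
    subst hu
    exact Finset.mem_image_of_mem _ (by simp [hi, hi']))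
  have h2 : (((Finset.univ.erase x).erase y).image h).card ≤ _ := Finset.card_image_le
  rw [Finset.card_erase_of_mem (by simp [hxy.symm]), Finset.card_erase_of_mem (by simp)] at h2
  simp at h2
  have : m ≠ 0 := by
    rintro rfl
    exact hxy (Fin.ext (by omega))
  omega

theorem isChar_one : IsChar (fun _ : ℚ => (1 : ℚ)) := ⟨rfl, by simp⟩

/-- plain weighted letter sums -/
noncomputable abbrev wsum {ι : Type} (w : List ι) : (ι → ℚ) →ₗ[ℚ] ℚ :=
  fox (fun _ : ℚ => (1 : ℚ)) (fun _ => 0) w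

theorem wsum_eq {ι : Type} (w : List ι) (P : ι → ℚ) : wsum w P = (w.map P).sum := by
  induction w with
  | nil => simp
  | cons x w ih => simp_all [wsum]

/-- The incidence map of a morphism. -/
noncomputable def inc {n m : ℕ} (t : Fin n → List (Fin m)) : (Fin m → ℚ) →ₗ[ℚ] (Fin n → ℚ) :=
  LinearMap.pi (fun x => wsum (t x))

theorem inc_inj {n m : ℕ} (t : Fin n → List (Fin m)) (ht : Good t) :
    Function.Injective (inc t) := by
  rw [injective_iff_map_eq_zero]
  intro v hv
  exact ht ℚ _ isChar_one (fun _ => 0) v (fun x => congrFun hv x)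

theorem inc_apply {n m : ℕ} (t : Fin n → List (Fin m)) (v : Fin m → ℚ) (x : Fin n) :
    inc t v x = ((t x).map v).sum := wsum_eq _ _

theorem wsum_replicate {ι : Type} (k : ℕ) (a : ι) (P : ι → ℚ) :
    wsum (List.replicate k a) P = k * P a := by simp [wsum_eq]

/-- The morphism sending letter `y` to a power of `c y`. -/
def powMor {m : ℕ} (c : Fin m → ℕ) (k : Fin m → ℕ) : Fin m → List ℕ :=
  fun y => List.replicate (k y) (c y)

theorem rank_powMor {n m : ℕ} (t : Fin n → List (Fin m)) (ht : Good t) (c : Fin m → ℕ)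
    (hc : Function.Injective c) (k : Fin m → ℕ) (hk : ∀ y, 0 < k y) :
    mRank (fun x => mApply (powMor c k) (t x)) = m := by
  apply le_antisymm
  · exact mRank_le_of_factor _ (powMor c k) t (fun _ => rfl)
  · have hmem : mRank (fun x => mApply (powMor c k) (t x)) ∈
        {r | ∃ A : Finset (List ℕ), A.card = r ∧
          ∀ i, InStar A ((fun x => mApply (powMor c k) (t x)) i)} :=
      Nat.sInf_mem ⟨_, _, rfl, fun i => inStar_mApply (powMor c k) (t i)⟩
    obtain ⟨B, hBc, hB⟩ := hmem
    rw [← hBc]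
    let Psi : (Fin m → ℚ) →ₗ[ℚ] (B → ℚ) :=
      LinearMap.pi (fun b => (wsum b.1) ∘ₗ (Function.ExtendByZero.linearMap ℚ c))
    have hinj : Function.Injective Psi := by
      rw [injective_iff_map_eq_zero]
      intro v hv
      set o : ℕ → ℚ := Function.ExtendByZero.linearMap ℚ c v with ho
      have hoc : ∀ y, o (c y) = v y := by
        intro y
        simp [ho, hc.extend_apply]
      have hb : ∀ b ∈ B, wsum b o = 0 := fun b hb => congrFun hv ⟨b, hb⟩
      have hz : inc t (fun y => (k y : ℚ) * v y) = 0 := by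
        funext x
        obtain ⟨l, hl, hfl⟩ := hB x
        have h0 : wsum l.flatten o = 0 := by
          clear hfl
          induction l with
          | nil => simp
          | cons a l ih =>
            have h1 := ih (fun u hu => hl u (List.mem_cons_of_mem _ hu))
            have h2 := hb a (hl a (List.mem_cons_self))
            rw [wsum_eq] at h1 h2 ⊢
            simp only [List.flatten_cons, List.map_append, List.sum_append, h1, h2, add_zero]
        rw [hfl] at h0
        rw [inc_apply]
        refine Eq.trans ?_ h0
        show _ = wsum (mApply (powMor c k) (t x)) o
        rw [wsum, fox_mApply isChar_one, ← wsum_eq]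
        have : (fun x => fox (fun _ : ℚ => (1 : ℚ)) (fun _ => 0) (powMor c k x) o)
            = fun y => (k y : ℚ) * v y := by
          funext y
          rw [← hoc y]
          exact wsum_replicate _ _ _
        rw [this]
        simp [wsum]
      have := inc_inj t ht (hz.trans (map_zero _).symm)
      funext y
      have hy := congrFun this y
      have : (k y : ℚ) ≠ 0 := by exact_mod_cast (hk y).ne'
      simpa [this] using hy
    have := LinearMap.finrank_le_finrank_of_injective hinj
    simpa using this

/-! ### Hahn series -/

/-- The character `q ↦ X^q`. -/
noncomputable def hch : ℚ → HahnSeries ℚ ℚ := fun q => HahnSeries.single q 1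

theorem isChar_hch : IsChar hch := ⟨rfl, fun a b => by simp [hch]⟩

theorem coeff_hch_mul (a q : ℚ) (x : HahnSeries ℚ ℚ) :
    (hch a * x).coeff q = x.coeff (q - a) := by
  have := HahnSeries.coeff_single_mul_add (r := (1 : ℚ)) (x := x) (a := q - a) (b := a)
  simpa [hch] using this

theorem fox_coeff {ι : Type} (l : ι → ℚ) (hl : ∀ i, 0 ≤ l i) (P : ι → ℚ) (hP : ∀ i, 0 ≤ P i)
    (w : List ι) : (∀ q, 0 ≤ (fox hch l w (fun i => HahnSeries.C (P i))).coeff q) ∧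
      ∀ q < 0, (fox hch l w (fun i => HahnSeries.C (P i))).coeff q = 0 := by
  induction w with
  | nil => simp
  | cons y w ih =>
    constructor
    · intro q
      rw [fox_cons, HahnSeries.coeff_add, coeff_hch_mul]
      refine add_nonneg ?_ (ih.1 _)
      rw [HahnSeries.C_apply, HahnSeries.coeff_single]
      split_ifs
      · exact hP y
      · exact le_rfl
    · intro q hq
      rw [fox_cons, HahnSeries.coeff_add, coeff_hch_mul, ih.2 _ (by linarith [hl y]),
        HahnSeries.C_apply, HahnSeries.coeff_single_of_ne hq.ne, add_zero]

/-- encoding of words -/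
noncomputable def enc (w : List ℕ) : HahnSeries ℚ ℚ :=
  fox hch (fun _ => 1) w (fun a => HahnSeries.C (a : ℚ))

theorem enc_coeff_zero (a : ℕ) (w : List ℕ) : (enc (a :: w)).coeff 0 = a := by
  have := (fox_coeff (fun _ : ℕ => (1 : ℚ)) (by simp) (fun a : ℕ => (a : ℚ)) (by simp) w).2 (0 - 1)
    (by norm_num)
  rw [enc, fox_cons, HahnSeries.coeff_add, coeff_hch_mul, this, HahnSeries.C_apply, HahnSeries.coeff_single_same, add_zero]

theorem enc_inj : ∀ (u v : List ℕ), (∀ a ∈ u, 0 < a) → (∀ a ∈ v, 0 < a) → enc u = enc v → u = v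
  | [], [], _, _, _ => rfl
  | [], a :: w, _, h2, h => by
    have := enc_coeff_zero a w
    rw [← h] at this
    have ha := h2 a (by simp)
    simp only [enc, fox_nil, HahnSeries.coeff_zero] at this
    have h3 : a = 0 := by exact_mod_cast this.symm
    omega
  | a :: w, [], h2, _, h => by
    have := enc_coeff_zero a w
    rw [h] at this
    have ha := h2 a (by simp)
    simp only [enc, fox_nil, HahnSeries.coeff_zero] at this
    have h3 : a = 0 := by exact_mod_cast this.symm
    omega
  | a :: w, b :: z, h1, h2, h => by
    have hab : a = b := by
      have := enc_coeff_zero a w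
      rw [h, enc_coeff_zero] at this
      exact_mod_cast this.symm
    subst hab
    have : enc w = enc z := by
      have h' : hch 1 * enc w = hch 1 * enc z := by
        simpa [enc] using h
      exact mul_left_cancel₀ (isChar_hch.ne_zero 1) h'
    rw [enc_inj w z (fun b hb => h1 b (List.mem_cons_of_mem _ hb))
      (fun b hb => h2 b (List.mem_cons_of_mem _ hb)) this]

theorem solves_iff {n : ℕ} (h : Fin n → List ℕ) (hpos : ∀ i, ∀ a ∈ h i, 0 < a)
    (u v : List (Fin n)) : mApply h u = mApply h v ↔
      fox hch (lenQ h) u (fun x => enc (h x)) = fox hch (lenQ h) v (fun x => enc (h x)) := by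
  have key : ∀ w, enc (mApply h w) = fox hch (lenQ h) w (fun x => enc (h x)) := by
    intro w
    rw [enc, fox_mApply isChar_hch]
    have : (fun x => ((h x).map (fun _ => (1 : ℚ))).sum) = lenQ h := by
      funext x; simp [lenQ]
    rw [this]
    rfl
  have hp : ∀ w, ∀ a ∈ mApply h w, 0 < a := by
    intro w a ha
    simp only [mApply, List.mem_flatten, List.mem_map] at ha
    obtain ⟨_, ⟨i, _, rfl⟩, ha⟩ := ha
    exact hpos i a ha
  rw [← key, ← key]
  exact ⟨fun h => by rw [h], enc_inj _ _ (hp u) (hp v)⟩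

theorem fox_ne_aux {n : ℕ} (l : Fin n → ℚ) (hl : ∀ i, 0 ≤ l i) (x : Fin n)
    (w v : List (Fin n)) (hv : v = [] ∨ ∃ y z, x ≠ y ∧ v = y :: z ∧ 0 < l y) :
    fox hch l (x :: w) ≠ fox hch l v := by
  intro h
  let P : Fin n → ℚ := fun i => if i = x then 1 else 0
  have hP : ∀ i, 0 ≤ P i := by intro i; simp only [P]; split_ifs <;> norm_num
  have h0 := congrArg (fun f => (f (fun i => HahnSeries.C (P i))).coeff 0) h
  simp only [fox_cons, HahnSeries.coeff_add, coeff_hch_mul] at h0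
  have h1 := (fox_coeff l hl P hP w).1 (0 - l x)
  have h2 : (fox hch l v (fun i => HahnSeries.C (P i))).coeff 0 = 0 := by
    rcases hv with rfl | ⟨y, z, hxy, rfl, hy⟩
    · simp
    · rw [fox_cons, HahnSeries.coeff_add, coeff_hch_mul,
        (fox_coeff l hl P hP z).2 _ (by linarith)]
      simp [P, hxy.symm]
  rw [h2] at h0
  simp [P] at h0
  simp [P] at h1
  linarith

theorem fox_ne {n : ℕ} (l : Fin n → ℚ) (hl : ∀ i, 0 ≤ l i)
    (hz : ∀ x y, x ≠ y → l x = 0 → l y = 0 → False) (u v : List (Fin n)) (huv : u ≠ v) :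
    fox hch l u ≠ fox hch l v := by
  obtain ⟨p, u', v', rfl, rfl, hc⟩ := list_decomp u v huv
  intro h
  have h' : fox hch l u' = fox hch l v' := by
    apply LinearMap.ext
    intro P
    have := congrArg (fun f => f P) h
    simp only [fox_append isChar_hch] at this
    exact mul_left_cancel₀ (isChar_hch.ne_zero _) (add_left_cancel this)
  rcases hc with ⟨y, w, rfl, rfl⟩ | ⟨x, w, rfl, rfl⟩ | ⟨x, y, w, z, hxy, rfl, rfl⟩
  · exact fox_ne_aux l hl y w [] (Or.inl rfl) h'.symm
  · exact fox_ne_aux l hl x w [] (Or.inl rfl) h'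
  · by_cases hy : l y = 0
    · have hx : 0 < l x := lt_of_le_of_ne (hl x) (fun h => hz x y hxy h.symm hy)
      exact fox_ne_aux l hl y z _ (Or.inr ⟨x, w, hxy.symm, rfl, hx⟩) h'.symm
    · have hy : 0 < l y := lt_of_le_of_ne (hl y) (Ne.symm hy)
      exact fox_ne_aux l hl x w _ (Or.inr ⟨y, z, hxy, rfl, hy⟩) h'

/-- On length types in the range of the incidence map, the solutions of a nontrivial equation
solved by `t` are described by `t` alone. -/
theorem solves_iff_range {m : ℕ} (t : Fin (m + 1) → List (Fin m)) (ht : Good t)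
    (u v : List (Fin (m + 1))) (huv : u ≠ v) (htuv : mApply t u = mApply t v)
    (h : Fin (m + 1) → List ℕ) (hpos : ∀ i, ∀ a ∈ h i, 0 < a) (hr : mRank h = m)
    (l : Fin m → ℚ) (hl : lenQ h = inc t l) :
    mApply h u = mApply h v ↔ (fun x => enc (h x)) ∈
      LinearMap.range (LinearMap.pi (fun x => fox hch l (t x))) := by
  set T := LinearMap.pi (fun x => fox hch l (t x)) with hT
  have hTinj : Function.Injective T := by
    rw [injective_iff_map_eq_zero]
    intro P hP
    exact ht _ hch isChar_hch l P (fun x => congrFun hP x)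
  set F := fox hch (lenQ h) u - fox hch (lenQ h) v with hF
  have hFne : F ≠ 0 := by
    rw [hF, sub_ne_zero]
    apply fox_ne _ (fun i => by simp [lenQ]) _ _ _ huv
    intro x y hxy hx hy
    exact at_most_one_zero h hr x y hxy (by simpa [lenQ] using hx) (by simpa [lenQ] using hy)
  have hle : LinearMap.range T ≤ LinearMap.ker F := by
    rintro _ ⟨P, rfl⟩
    rw [LinearMap.mem_ker, hF, LinearMap.sub_apply, sub_eq_zero]
    have hlen : lenQ h = fun x => ((t x).map l).sum := by
      rw [hl]; funext x; exact inc_apply _ _ _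
    have := congrArg (fun w => fox hch l w P) htuv
    simp only [fox_mApply isChar_hch] at this
    rw [hlen]
    exact this
  have heq : LinearMap.range T = LinearMap.ker F := by
    apply Submodule.eq_of_le_of_finrank_le hle
    rw [LinearMap.finrank_range_of_inj hTinj]
    have : LinearMap.ker F ≠ ⊤ := by
      rwa [Ne, LinearMap.ker_eq_top]
    have := Submodule.finrank_lt this
    simp at this ⊢
    omega
  rw [solves_iff h hpos, heq, LinearMap.mem_ker, hF, LinearMap.sub_apply, sub_eq_zero]


/-- Let `E₁, E₂` be nontrivial equations on `n` unknowns whose sets of solutions of rank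
`n − 1` differ, and let `S` be a minimal family of `(n − 1)`-dimensional subspaces of `ℚⁿ`
covering the length types of all common solutions of rank `n − 1`. Then for every `W ∈ S`
and every length type `L ∈ W`, the equations `E₁` and `E₂` have the same solutions of rank
`n − 1` and length type `L`. -/
theorem minimal_cover_same_solutions {n : ℕ}
    (A : Finset ℕ) (hA : ∀ a ∈ A, 0 < a)
    (e₁ e₂ : List (Fin n) × List (Fin n))
    (h₁ : e₁.1 ≠ e₁.2) (h₂ : e₂.1 ≠ e₂.2)
    (hdiff :
      {h : Fin n → List ℕ | IntoAlph A h ∧ mApply h e₁.1 = mApply h e₁.2 ∧ mRank h = n - 1}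
        ≠ {h : Fin n → List ℕ | IntoAlph A h ∧ mApply h e₂.1 = mApply h e₂.2 ∧
            mRank h = n - 1})
    (S : Finset (Submodule ℚ (Fin n → ℚ)))
    (hdim : ∀ W ∈ S, Module.finrank ℚ W = n - 1)
    (hcov : ∀ h : Fin n → List ℕ, IntoAlph A h →
      mApply h e₁.1 = mApply h e₁.2 → mApply h e₂.1 = mApply h e₂.2 →
      mRank h = n - 1 → ∃ W ∈ S, lenQ h ∈ W)
    (hmin : ∀ S' ⊂ S, ¬ (∀ h : Fin n → List ℕ, IntoAlph A h →
      mApply h e₁.1 = mApply h e₁.2 → mApply h e₂.1 = mApply h e₂.2 →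
      mRank h = n - 1 → ∃ W ∈ S', lenQ h ∈ W)) :
    ∀ W ∈ S, ∀ L : Fin n → ℕ, (fun i => (L i : ℚ)) ∈ W →
      ∀ h : Fin n → List ℕ, IntoAlph A h → (∀ i, (h i).length = L i) →
        mRank h = n - 1 →
        (mApply h e₁.1 = mApply h e₁.2 ↔ mApply h e₂.1 = mApply h e₂.2) := by
  cases n with
  | zero =>
    exfalso
    apply h₁
    have : ∀ w : List (Fin 0), w = [] := by
      intro w
      cases w with
      | nil => rfl
      | cons a _ => exact a.elim0
    rw [this e₁.1, this e₁.2]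
  | succ m =>
  simp only [Nat.add_sub_cancel] at hdim hcov hmin ⊢
  intro W hW L hL h hhA hhL hhr
  -- the witness for `W`
  have hwit := hmin (S.erase W) (Finset.erase_ssubset hW)
  push Not at hwit
  obtain ⟨k, hkA, hk1, hk2, hkr, hkW⟩ := hwit
  have honly : ∀ W' ∈ S, lenQ k ∈ W' → W' = W := by
    intro W' hW' hm
    by_contra hne
    exact hkW W' (Finset.mem_erase.mpr ⟨hne, hW'⟩) hm
  obtain ⟨t, g, htg, ht⟩ := struct_main _ k _ _ h₁ le_rfl hk1
  have ht1 := factor_solves k g t htg hkr _ _ hk1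
  have ht2 := factor_solves k g t htg hkr _ _ hk2
  -- enough letters
  have hcard : m ≤ A.card := by
    rw [← hkr]
    refine (mRank_le k (A.image (fun a => [a])) ?_).trans Finset.card_image_le
    intro i
    refine ⟨(k i).map (fun a => [a]), ?_, ?_⟩
    · intro u hu
      obtain ⟨a, ha, rfl⟩ := List.mem_map.mp hu
      exact Finset.mem_image_of_mem _ (hkA i a ha)
    · induction k i with
      | nil => rfl
      | cons a w ih => simp_all
  obtain ⟨c, hcA, hcinj⟩ : ∃ c : Fin m → ℕ, (∀ y, c y ∈ A) ∧ Function.Injective c :=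
    ⟨fun y => A.orderEmbOfFin rfl (Fin.castLE hcard y), fun y => Finset.orderEmbOfFin_mem _ _ _,
      fun a b hab => by simpa using hab⟩
  -- every positive combination is covered
  have hcover : ∀ p : Fin m → ℕ, (∀ y, 0 < p y) → ∃ W' ∈ S, inc t (fun y => (p y : ℚ)) ∈ W' := by
    intro p hp
    have hlen : lenQ (fun x => mApply (powMor c p) (t x)) = inc t (fun y => (p y : ℚ)) := by
      funext x
      rw [inc_apply]
      simp only [lenQ]
      induction t x with
      | nil => simp
      | cons a w ih => simp [powMor, ← ih]
    rw [← hlen]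
    apply hcov
    · intro i a ha
      simp only [mApply, List.mem_flatten, List.mem_map] at ha
      obtain ⟨_, ⟨y, _, rfl⟩, ha⟩ := ha
      rw [List.eq_of_mem_replicate ha]
      exact hcA y
    · rw [mApply_comp (powMor c p) t _ (fun _ => rfl), mApply_comp (powMor c p) t _ (fun _ => rfl),
        ht1]
    · rw [mApply_comp (powMor c p) t _ (fun _ => rfl), mApply_comp (powMor c p) t _ (fun _ => rfl),
        ht2]
    · exact rank_powMor t ht c hcinj p hp
  have hk0 : lenQ k = inc t (fun y => ((g y).length : ℚ)) := by
    funext x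
    rw [inc_apply]
    simp only [lenQ, htg]
    induction t x with
    | nil => simp
    | cons a w ih => simp [← ih]
  have hposW : ∀ p : Fin m → ℕ, (∀ y, 0 < p y) → inc t (fun y => (p y : ℚ)) ∈ W := by
    intro p hp
    have hex : ∀ s : ℕ, ∃ W' : S, lenQ k + ((s : ℚ) + 1) • inc t (fun y => (p y : ℚ)) ∈ W'.1 := by
      intro s
      obtain ⟨W', hW', hm⟩ := hcover (fun y => (g y).length + (s + 1) * p y)
        (fun y => Nat.add_pos_right _ (Nat.mul_pos (Nat.succ_pos s) (hp y)))
      refine ⟨⟨W', hW'⟩, ?_⟩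
      rw [hk0, ← map_smul, ← map_add]
      convert hm using 2
      funext y
      simp
    choose f hf using hex
    obtain ⟨a, b, hab, hfab⟩ := Finite.exists_ne_map_eq_of_infinite f
    have ha := hf a
    have hb := hf b
    rw [← hfab] at hb
    have hab' : (a : ℚ) - b ≠ 0 := sub_ne_zero.mpr (by exact_mod_cast hab)
    have hd : ((a : ℚ) - b) • inc t (fun y => (p y : ℚ)) ∈ (f a).1 := by
      have := (f a).1.sub_mem ha hb
      convert this using 1
      module
    have hp' : inc t (fun y => (p y : ℚ)) ∈ (f a).1 := ((f a).1.smul_mem_iff hab').mp hd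
    have hk' : lenQ k ∈ (f a).1 :=
      ((f a).1.add_mem_iff_left ((f a).1.smul_mem _ hp')).mp ha
    rw [← honly _ (f a).2 hk']
    exact hp'
  have hrange : LinearMap.range (inc t) ≤ W := by
    rintro _ ⟨v, rfl⟩
    rw [LinearMap.pi_apply_eq_sum_univ]
    refine W.sum_mem (fun i _ => W.smul_mem _ ?_)
    have q1 := hposW (fun _ => 1) (fun _ => Nat.one_pos)
    have q2 := hposW (fun j => 1 + if i = j then 1 else 0) (fun _ => by omega)
    have := W.sub_mem q2 q1
    rw [← map_sub] at this
    convert this using 2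
    funext j
    simp
  have hWeq : LinearMap.range (inc t) = W := by
    apply Submodule.eq_of_le_of_finrank_le hrange
    rw [LinearMap.finrank_range_of_inj (inc_inj t ht), hdim W hW]
    simp
  rw [← hWeq] at hL
  obtain ⟨l, hl⟩ := hL
  have hlen : lenQ h = inc t l := by
    rw [hl]; funext i; simp [lenQ, hhL]
  have hpos : ∀ i, ∀ a ∈ h i, 0 < a := fun i a ha => hA a (hhA i a ha)
  rw [solves_iff_range t ht _ _ h₁ ht1 h hpos hhr l hlen,
    solves_iff_range t ht _ _ h₂ ht2 h hpos hhr l hlen]
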